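/- Let 𝒞 be an abelian category and let 𝒜 be a full additive subcategory satisfying (C2'). Then the relative weak idempotent completion of 𝒜 in 𝒞 is deflation-closed in 𝒞: for every short exact sequence 0 → X → Y → Z → 0 in 𝒞 in which Y and Z belong to the relative weak idempotent completion of 𝒜, also X belongs to the relative weak idempotent completion of 𝒜. -/

import Mathlib

open CategoryTheory CategoryTheory.Limits ZeroObject

universe v u

variable {C : Type u} [Category.{v} C] [Abelian C]

/-- A full additive subcategory of `C`, given as a predicate on objects:
closed under isomorphisms, containing the zero object, closed under binary biproducts. -/
structure IsAdditiveClosed (𝒜 : C → Prop) : Prop where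
  iso : ∀ {X Y : C}, (X ≅ Y) → 𝒜 X → 𝒜 Y
  zero : 𝒜 0
  biprod : ∀ {X Y : C}, 𝒜 X → 𝒜 Y → 𝒜 (X ⊞ Y)

/-- `𝒜` is deflation-closed: for every short exact sequence `0 → X → Y → Z → 0`
with `Y, Z ∈ 𝒜`, also `X ∈ 𝒜`. -/
def DeflationClosed (𝒜 : C → Prop) : Prop :=
  ∀ (S : ShortComplex C), S.ShortExact → 𝒜 S.X₂ → 𝒜 S.X₃ → 𝒜 S.X₁

/-- Axiom (PR2): every object of `C` admits an epimorphism from an object of `𝒜`. -/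
def PR2 (𝒜 : C → Prop) : Prop :=
  ∀ E : C, ∃ (A : C) (f : A ⟶ E), 𝒜 A ∧ Epi f

/-- A short exact sequence `0 → A → B → C → 0` in `C` with all terms in `𝒜` is an
`𝒜`-conflation if for every morphism `h : D ⟶ C` with `D ∈ 𝒜`, the pullback of the
epimorphism along `h` lies in `𝒜`. -/
def IsAConflation (𝒜 : C → Prop) (S : ShortComplex C) : Prop :=
  S.ShortExact ∧ 𝒜 S.X₁ ∧ 𝒜 S.X₂ ∧ 𝒜 S.X₃ ∧
    ∀ (D : C) (h : D ⟶ S.X₃), 𝒜 D → 𝒜 (pullback S.g h)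

/-- Axiom (C2'): every short exact sequence `0 → X → Y → C → 0` with `C ∈ 𝒜` receives a
morphism from an `𝒜`-conflation `0 → A → B → C → 0` over the identity of `C`. -/
def C2' (𝒜 : C → Prop) : Prop :=
  ∀ ⦃X Y Z : C⦄ (i : X ⟶ Y) (p : Y ⟶ Z) (w : i ≫ p = 0),
    (ShortComplex.mk i p w).ShortExact → 𝒜 Z →
    ∃ (A B : C) (i' : A ⟶ B) (p' : B ⟶ Z) (w' : i' ≫ p' = 0)
      (a : A ⟶ X) (b : B ⟶ Y),
      IsAConflation 𝒜 (ShortComplex.mk i' p' w') ∧ i' ≫ b = a ≫ i ∧ b ≫ p = p'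

/-- The relative weak idempotent completion of `𝒜` in `C`: all objects isomorphic to a
kernel of a retraction `r : A ⟶ B` (admitting a section `s` with `s ≫ r = 𝟙 B`) between
objects of `𝒜`. -/
def RelWeakIdemCompletion (𝒜 : C → Prop) (X : C) : Prop :=
  ∃ (A B : C) (r : A ⟶ B) (s : B ⟶ A),
    𝒜 A ∧ 𝒜 B ∧ s ≫ r = 𝟙 B ∧ Nonempty (X ≅ kernel r)

theorem rwic_exists (𝒜 : C → Prop) (hadd : IsAdditiveClosed 𝒜) {X : C}
    (h : RelWeakIdemCompletion 𝒜 X) : ∃ B, 𝒜 B ∧ 𝒜 (X ⊞ B) := by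
  obtain ⟨A, B, r, s, hA, hB, hs, ⟨e⟩⟩ := h
  refine ⟨B, hB, hadd.iso (X := A) ?_ hA⟩
  have hk : (𝟙 A - r ≫ s) ≫ r = 0 := by simp [hs]
  exact
    { hom := biprod.lift (kernel.lift r (𝟙 A - r ≫ s) hk ≫ e.inv) r
      inv := biprod.desc (e.hom ≫ kernel.ι r) s
      hom_inv_id := by simp [biprod.lift_desc]
      inv_hom_id := by
        have h1 : kernel.ι r ≫ kernel.lift r (𝟙 A - r ≫ s) hk = 𝟙 _ := by
          rw [← cancel_mono (kernel.ι r)]; simp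
        have h2 : s ≫ kernel.lift r (𝟙 A - r ≫ s) hk = 0 := by
          rw [← cancel_mono (kernel.ι r)]; simp [reassoc_of% hs]
        ext
        · simp [reassoc_of% h1]
        · simp
        · simp [reassoc_of% h2]
        · simp [hs] }

theorem rwic_of (𝒜 : C → Prop) {X B : C}
    (hB : 𝒜 B) (h : 𝒜 (X ⊞ B)) : RelWeakIdemCompletion 𝒜 X :=
  ⟨X ⊞ B, B, biprod.snd, biprod.inr, h, hB, by simp,
    ⟨(biprod.isKernelSndKernelFork X B).conePointUniqueUpToIso
      (limit.isLimit _)⟩⟩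

theorem rwic_base (𝒜 : C → Prop) (hC2 : C2' 𝒜) {X Y Z : C} (f : X ⟶ Y) (g : Y ⟶ Z)
    (w : f ≫ g = 0) (hS : (ShortComplex.mk f g w).ShortExact) (hY : 𝒜 Y) (hZ : 𝒜 Z) :
    RelWeakIdemCompletion 𝒜 X := by
  obtain ⟨A, B, i', p', w', a, b, hc, h1, h2⟩ := hC2 f g w hS hZ
  have hf : Mono f := hS.mono_f
  obtain ⟨s, hs⟩ : ∃ s : B ⟶ pullback p' g, s ≫ pullback.fst p' g = 𝟙 B :=
    ⟨pullback.lift (𝟙 B) b (by simp [h2]), pullback.lift_fst _ _ _⟩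
  obtain ⟨t, ht1, ht2⟩ : ∃ t : X ⟶ pullback p' g, t ≫ pullback.fst p' g = 0 ∧
      t ≫ pullback.snd p' g = f :=
    ⟨pullback.lift 0 f (by simp [w]), pullback.lift_fst _ _ _, pullback.lift_snd _ _ _⟩
  refine ⟨pullback p' g, B, pullback.fst p' g, s,
    hc.2.2.2.2 Y g hY, hc.2.2.1, hs, ⟨?_⟩⟩
  have hk : kernel.ι (pullback.fst p' g) ≫ pullback.snd p' g ≫ g = 0 := by
    rw [← pullback.condition, kernel.condition_assoc, zero_comp]
  have hl : hS.exact.lift (kernel.ι (pullback.fst p' g) ≫ pullback.snd p' g) (by simpa using hk) ≫ f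
      = kernel.ι (pullback.fst p' g) ≫ pullback.snd p' g := hS.exact.lift_f _ _
  exact
    { hom := kernel.lift _ t ht1
      inv := hS.exact.lift (kernel.ι (pullback.fst p' g) ≫ pullback.snd p' g) (by simpa using hk)
      hom_inv_id := by
        rw [← cancel_mono f, Category.assoc, hl]; simp [ht2]
      inv_hom_id := by
        rw [← cancel_mono (kernel.ι (pullback.fst p' g))]
        apply pullback.hom_ext
        · simp [ht1]
        · simpa [ht2] using hl }

/-- If `𝒜` satisfies (C2'), then the relative weak idempotent completion of `𝒜` in `C`
is deflation-closed in `C`. -/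
theorem relWeakIdemCompletion_deflationClosed_of_C2'
    (𝒜 : C → Prop) (hadd : IsAdditiveClosed 𝒜) (hC2 : C2' 𝒜) :
    DeflationClosed (RelWeakIdemCompletion 𝒜) := by
  intro S hS h2 h3
  obtain ⟨B₁, hB₁, hY⟩ := rwic_exists 𝒜 hadd h2
  obtain ⟨B₂, hB₂, hZ⟩ := rwic_exists 𝒜 hadd h3
  have hf : Mono S.f := hS.mono_f
  have hg : Epi S.g := hS.epi_g
  let i : S.X₁ ⊞ B₁ ⟶ (S.X₂ ⊞ B₁) ⊞ B₂ := biprod.map S.f (𝟙 B₁) ≫ biprod.inl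
  let p : (S.X₂ ⊞ B₁) ⊞ B₂ ⟶ S.X₃ ⊞ B₂ := biprod.map (biprod.fst ≫ S.g) (𝟙 B₂)
  have w : i ≫ p = 0 := by
    ext <;> simp [i, p]
  have hi : Mono i := by
    dsimp only [i]; infer_instance
  have hp : Epi p := by
    have : Epi (biprod.fst ≫ S.g : S.X₂ ⊞ B₁ ⟶ S.X₃) := epi_comp _ _
    dsimp only [p]; infer_instance
  have hex : (ShortComplex.mk i p w).ShortExact := by
    refine { exact := ShortComplex.exact_of_f_is_kernel _ ?_, mono_f := hi, epi_g := hp }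
    have key : ∀ {W : C} (k : W ⟶ (S.X₂ ⊞ B₁) ⊞ B₂), k ≫ p = 0 →
        (k ≫ biprod.fst ≫ biprod.fst) ≫ S.g = 0 ∧ k ≫ biprod.snd = 0 := by
      intro W k hk
      constructor
      · simpa [p] using congrArg (· ≫ biprod.fst) hk
      · simpa [p] using congrArg (· ≫ biprod.snd) hk
    refine KernelFork.IsLimit.ofι' _ _ (fun {W} k hk => ⟨biprod.lift
      (hS.exact.lift (k ≫ biprod.fst ≫ biprod.fst) (key k hk).1) (k ≫ biprod.fst ≫ biprod.snd), ?_⟩)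
    have := hS.exact.lift_f _ (key k hk).1
    have h' := (key k hk).2
    apply biprod.hom_ext
    · apply biprod.hom_ext
      · simpa [i] using this
      · simp [i]
    · simp [i, h']
  have hY' := hadd.biprod hY hB₂
  obtain ⟨B, hB, hXB⟩ := rwic_exists 𝒜 hadd (rwic_base 𝒜 hC2 i p w hex hY' hZ)
  exact rwic_of 𝒜 (hadd.biprod hB₁ hB) (hadd.iso (biprod.associator _ _ _) hXB)
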